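/- Let n₁ ≥ 2 and n₂ ≥ 1 be integers, let g ≥ 0, and let S = {(w, x) ∈ ℝ^{n₁} × ℝ^{n₂} : Σ_{i=1}^{n₁} wᵢ² − Σ_{j=1}^{n₂} xⱼ² = g and (w,x) ∈ P} for some set P. If (a, b) ∈ S and (a, b) lies in the topological interior of P, then (a, b) is not an extreme point of S. -/

import Mathlib

/-!
Suppose `u ≠ 0` is isotropic for the quadratic form `Q` and `Q`-orthogonal to `p`. Then `Q` is
constant on the line `p + ℝ u`, so near a point `p` in the interior of `P` the set
`{Q = g} ∩ P` contains a segment centred at `p`, and `p` is not extreme.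

To find `u` when `0 ≤ Q p`: if `p` itself is nonzero and isotropic, take `u = p`. Otherwise the
orthogonal complement of `p` still contains a positive vector, because it is a hyperplane or the
whole space and therefore meets every positive definite plane, and a negative vector, obtained by
projecting along `p`. Some combination of the two is isotropic.
-/

open QuadraticMap Set Topology

section ExtremePoints

variable {𝕜 E : Type*} [AddCommGroup E]

theorem notMem_extremePoints_of_add_mem_of_sub_mem [Ring 𝕜] [LinearOrder 𝕜]
    [IsStrictOrderedRing 𝕜] [Invertible (2 : 𝕜)] [Module 𝕜 E] {A : Set E} {p v : E}
    (hv : v ≠ 0) (hadd : p + v ∈ A) (hsub : p - v ∈ A) : p ∉ A.extremePoints 𝕜 := fun hp =>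
  hv (add_eq_left.1 (hp.2 hadd hsub (mem_openSegment_add_sub p v)))

theorem exists_ne_zero_add_smul_mem_sub_smul_mem [Ring 𝕜] [TopologicalSpace 𝕜]
    [(𝓝[≠] (0 : 𝕜)).NeBot] [TopologicalSpace E] [IsTopologicalAddGroup E] [Module 𝕜 E]
    [ContinuousSMul 𝕜 E] {P : Set E} {p : E} (hP : P ∈ 𝓝 p) (u : E) :
    ∃ t : 𝕜, t ≠ 0 ∧ p + t • u ∈ P ∧ p - t • u ∈ P := by
  have hadd : ∀ᶠ t : 𝕜 in 𝓝 0, p + t • u ∈ P :=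
    (show Continuous fun t : 𝕜 => p + t • u by fun_prop).continuousAt.eventually_mem
      (by simpa only [zero_smul, add_zero] using hP)
  have hsub : ∀ᶠ t : 𝕜 in 𝓝 0, p - t • u ∈ P :=
    (show Continuous fun t : 𝕜 => p - t • u by fun_prop).continuousAt.eventually_mem
      (by simpa only [zero_smul, sub_zero] using hP)
  have hne : ∀ᶠ t : 𝕜 in 𝓝[≠] 0, t ≠ 0 := eventually_mem_nhdsWithin
  exact (hne.and ((hadd.and hsub).filter_mono nhdsWithin_le_nhds)).exists

end ExtremePoints

section Isotropic

theorem map_add_smul_of_isOrtho_of_isotropic {R M N : Type*} [CommRing R] [AddCommGroup M]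
    [Module R M] [AddCommGroup N] [Module R N] {Q : QuadraticMap R M N} {p u : M}
    (hu : Q u = 0) (hpu : Q.IsOrtho p u) (t : R) : Q (p + t • u) = Q p := by
  rw [QuadraticMap.map_add Q, QuadraticMap.map_smul, polar_smul_right, hu, hpu.polar_eq_zero,
    smul_zero, smul_zero, add_zero, add_zero]

theorem exists_isOrtho_of_neg {R M : Type*} [CommRing R] [LinearOrder R] [IsStrictOrderedRing R]
    [AddCommGroup M] [Module R M] {Q : QuadraticForm R M} {p y : M} (hp : 0 < Q p)
    (hy : Q y < 0) : ∃ z, Q.IsOrtho p z ∧ Q z < 0 := by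
  -- Twice `Q p` times the projection of `y` along `p`, to avoid dividing by `Q p`.
  refine ⟨(2 * Q p) • y - polar Q p y • p, ?_, ?_⟩
  · rw [← isOrtho_polarBilin, polarBilin_apply_apply, polar_sub_right, polar_smul_right,
      polar_smul_right, polar_self]
    simp only [smul_eq_mul, nsmul_eq_mul, Nat.cast_ofNat]
    ring
  · calc Q ((2 * Q p) • y - polar Q p y • p)
        = 4 * Q p ^ 2 * Q y - Q p * polar Q p y ^ 2 := by
          rw [sub_eq_add_neg, QuadraticMap.map_add Q, QuadraticMap.map_neg, QuadraticMap.map_smul,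
            QuadraticMap.map_smul, polar_neg_right, polar_smul_left, polar_smul_right,
            polar_comm Q y p]
          simp only [smul_eq_mul]
          ring
      _ < 0 := sub_neg_of_lt <|
          (mul_neg_of_pos_of_neg (by positivity) hy).trans_le (by positivity)

theorem exists_pos_isOrtho {K M : Type*} [Field K] [PartialOrder K] [AddCommGroup M] [Module K M]
    {Q : QuadraticForm K M} {V : Submodule K M} (hrank : 1 < Module.finrank K V)
    (hV : (Q.restrict V).PosDef) (p : M) : ∃ x, Q.IsOrtho p x ∧ 0 < Q x := by
  have : Module.Finite K V := Module.finite_of_finrank_pos (zero_lt_one.trans hrank)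
  obtain ⟨x, hx, hx0⟩ := Submodule.exists_mem_ne_zero_of_ne_bot <|
    (Q.polarBilin p ∘ₗ V.subtype).ker_ne_bot_of_finrank_lt (by rwa [Module.finrank_self])
  exact ⟨x, isOrtho_polarBilin.1 hx, hV x hx0⟩

variable {E : Type*} [AddCommGroup E] [Module ℝ E] {Q : QuadraticForm ℝ E}

theorem exists_add_smul_isotropic {x y : E} (hx : 0 < Q x) (hy : Q y < 0) :
    ∃ t : ℝ, x + t • y ≠ 0 ∧ Q (x + t • y) = 0 := by
  have hdiscrim : 0 ≤ discrim (Q y) (polar Q x y) (Q x) := by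
    rw [discrim]
    nlinarith [sq_nonneg (polar Q x y), mul_neg_of_neg_of_pos hy hx]
  obtain ⟨t, ht⟩ := exists_quadratic_eq_zero hy.ne ⟨_, (Real.mul_self_sqrt hdiscrim).symm⟩
  refine ⟨t, fun hzero => ?_, ?_⟩
  · have hxy : Q x = t * t * Q y := by
      rw [eq_neg_of_add_eq_zero_left hzero, QuadraticMap.map_neg, QuadraticMap.map_smul,
        smul_eq_mul]
    exact hx.not_ge (hxy ▸ mul_nonpos_of_nonneg_of_nonpos (mul_self_nonneg t) hy.le)
  · rw [QuadraticMap.map_add Q, QuadraticMap.map_smul, polar_smul_right, smul_eq_mul, smul_eq_mul]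
    linarith

theorem exists_isotropic_isOrtho {V : Submodule ℝ E} (hrank : 1 < Module.finrank ℝ V)
    (hV : (Q.restrict V).PosDef) {y : E} (hy : Q y < 0) {p : E} (hp : 0 ≤ Q p) :
    ∃ u ≠ 0, Q u = 0 ∧ Q.IsOrtho p u := by
  by_cases hiso : p ≠ 0 ∧ Q p = 0
  · refine ⟨p, hiso.1, hiso.2, isOrtho_def.2 ?_⟩
    rw [map_add_self, hiso.2, smul_zero, add_zero]
  obtain ⟨x, hpx, hx⟩ := exists_pos_isOrtho hrank hV p
  obtain ⟨z, hpz, hz⟩ : ∃ z, Q.IsOrtho p z ∧ Q z < 0 := by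
    rcases eq_or_ne p 0 with rfl | hp0
    · exact ⟨y, .zero_left y, hy⟩
    · exact exists_isOrtho_of_neg (hp.lt_of_ne' fun h => hiso ⟨hp0, h⟩) hy
  obtain ⟨t, hne, hzero⟩ := exists_add_smul_isotropic hx hz
  refine ⟨x + t • z, hne, hzero, isOrtho_polarBilin.1 ?_⟩
  rw [map_add, map_smul, isOrtho_polarBilin.2 hpx, isOrtho_polarBilin.2 hpz, smul_zero, add_zero]

end Isotropic

section SumSqSubSumSq

variable (ι κ : Type*) [Fintype ι] [Fintype κ]

/-- The quadratic form `(w, x) ↦ ∑ wᵢ² - ∑ xⱼ²` on `ℝ^ι × ℝ^κ`, whose level sets are the quadrics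
without linear terms; it is built from `QuadraticMap.prod` so that its restrictions to the two
factors are visible. -/
noncomputable def sumSqSubSumSq : QuadraticForm ℝ ((ι → ℝ) × (κ → ℝ)) :=
  (QuadraticMap.pi fun _ => sq).prod (-QuadraticMap.pi fun _ => sq)

variable {ι κ}

theorem sumSqSubSumSq_apply (p : (ι → ℝ) × (κ → ℝ)) :
    sumSqSubSumSq ι κ p = ∑ i, p.1 i ^ 2 - ∑ j, p.2 j ^ 2 := by
  simp only [sumSqSubSumSq, prod_apply, neg_apply, pi_apply, sq_apply, pow_two, sub_eq_add_neg]

theorem posDef_restrict_range_inl_sumSqSubSumSq :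
    ((sumSqSubSumSq ι κ).restrict (LinearMap.range (LinearMap.inl ℝ (ι → ℝ) (κ → ℝ)))).PosDef := by
  rintro ⟨_, w, rfl⟩ hw
  have hpos : (QuadraticMap.pi fun _ : ι => (sq : QuadraticForm ℝ ℝ)).PosDef :=
    posDef_pi_iff.2 fun _ => linMulLinSelfPosDef LinearMap.id LinearMap.ker_id
  have hw0 : w ≠ 0 := by
    rintro rfl
    exact hw (Subtype.ext (map_zero _))
  simpa [sumSqSubSumSq] using hpos w hw0

theorem exists_sumSqSubSumSq_neg [Nonempty κ] : ∃ y, sumSqSubSumSq ι κ y < 0 :=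
  ⟨(0, 1), by simp [sumSqSubSumSq_apply, Fintype.card_pos]⟩

end SumSqSubSumSq

theorem not_extremePoint_of_mem_interior_quadric_no_linear_general
    {E : Type*} [AddCommGroup E] [Module ℝ E] [TopologicalSpace E] [IsTopologicalAddGroup E]
    [ContinuousSMul ℝ E] {Q : QuadraticForm ℝ E}
    {V : Submodule ℝ E} (hrank : 1 < Module.finrank ℝ V) (hV : (Q.restrict V).PosDef)
    (hneg : ∃ y, Q y < 0) {g : ℝ} (hg : 0 ≤ g) {P : Set E} {p : E} (hpP : p ∈ interior P) :
    p ∉ {q | Q q = g ∧ q ∈ P}.extremePoints ℝ := by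
  intro hp
  obtain ⟨y, hy⟩ := hneg
  have hpg : Q p = g := hp.1.1
  obtain ⟨u, hu0, hu, hpu⟩ := exists_isotropic_isOrtho hrank hV hy (hpg ▸ hg)
  have hline (t : ℝ) : Q (p + t • u) = g :=
    (map_add_smul_of_isOrtho_of_isotropic hu hpu t).trans hpg
  obtain ⟨t, ht, hadd, hsub⟩ :=
    exists_ne_zero_add_smul_mem_sub_smul_mem (𝕜 := ℝ) (mem_interior_iff_mem_nhds.1 hpP) u
  refine absurd hp <| notMem_extremePoints_of_add_mem_of_sub_mem (smul_ne_zero ht hu0)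
    ⟨hline t, hadd⟩ ⟨?_, hsub⟩
  rw [sub_eq_add_neg, ← neg_smul, hline]

/-- Let `S = {(w,x) ∈ ℝ^{n₁} × ℝ^{n₂} : Σ wᵢ² − Σ xⱼ² = g, (w,x) ∈ P}` with `n₁ ≥ 2`,
`n₂ ≥ 1` and `g ≥ 0`.  Any point of `S` lying in the topological interior of `P` is not
an extreme point of `S`. -/
theorem not_extremePoint_of_mem_interior_quadric_no_linear
    (n₁ n₂ : ℕ) (hn₁ : 2 ≤ n₁) (hn₂ : 1 ≤ n₂) (g : ℝ) (hg : 0 ≤ g)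
    (P : Set ((Fin n₁ → ℝ) × (Fin n₂ → ℝ)))
    (S : Set ((Fin n₁ → ℝ) × (Fin n₂ → ℝ)))
    (hS : S = {p | (∑ i, (p.1 i) ^ 2) - (∑ j, (p.2 j) ^ 2) = g ∧ p ∈ P})
    (p : (Fin n₁ → ℝ) × (Fin n₂ → ℝ))
    (hpS : p ∈ S) (hpP : p ∈ interior P) :
    p ∉ S.extremePoints ℝ := by
  have : Nonempty (Fin n₂) := ⟨⟨0, hn₂⟩⟩
  simpa only [hS, sumSqSubSumSq_apply] using
    not_extremePoint_of_mem_interior_quadric_no_linear_general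
      (by rwa [LinearMap.finrank_range_of_inj LinearMap.inl_injective, Module.finrank_fin_fun])
      posDef_restrict_range_inl_sumSqSubSumSq exists_sumSqSubSumSq_neg hg hpP
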